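/- Let S be an abelian subgroup of the Pauli group G_d^n with no nontrivial scalars and Nat.card S = d^n, let ψ be a nonzero vector in Fix(S), and let w_1, …, w_K ∈ G_d^n with w_1 = 1 be such that the vectors w_i.mulVec ψ are linearly independent over ℂ; let Q be their ℂ-span. For each i, let f_i : S → ZMod d be the function f_i(s) = ω(R(s), R(w_i)). If the set {f_1, …, f_K} is closed under pointwise addition (for all i, j there exists l with f_i + f_j = f_l), then Q is a stabilizer code: there exists an abelian subgroup H of G_d^n with no nontrivial scalars whose fixed subspace Fix(H) equals Q. -/

import Mathlib

open Matrix

noncomputable def q (d : ℕ) : ℂ := Complex.exp (2 * Real.pi * Complex.I / d)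

/-- Dot product of two vectors over `ZMod d`. -/
def dotp {n d : ℕ} (A B : Fin n → ZMod d) : ZMod d := ∑ i, A i * B i

/-- The Pauli word `W(U,V)` with entries `q^{⟨U,J⟩}` at `(J, K)` when `J = K + V`. -/
noncomputable def PauliWord (d n : ℕ) (U V : Fin n → ZMod d) :
    Matrix (Fin n → ZMod d) (Fin n → ZMod d) ℂ :=
  Matrix.of fun J K => if J = K + V then q d ^ (dotp U J).val else 0

/-- The n-qudit Pauli group, as a set of matrices. -/
noncomputable def PauliSet (d n : ℕ) : Set (Matrix (Fin n → ZMod d) (Fin n → ZMod d) ℂ) :=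
  {g | ∃ (k : ZMod d) (U V : Fin n → ZMod d), g = q d ^ k.val • PauliWord d n U V}

/-- The subspace of states fixed by every matrix in `S`. -/
noncomputable def FixSubspace (d n : ℕ) [NeZero d]
    (S : Set (Matrix (Fin n → ZMod d) (Fin n → ZMod d) ℂ)) :
    Submodule ℂ ((Fin n → ZMod d) → ℂ) where
  carrier := {ψ | ∀ s ∈ S, s.mulVec ψ = ψ}
  add_mem' := by
    intro a b ha hb s hs
    simp [Matrix.mulVec_add, ha s hs, hb s hs]
  zero_mem' := by
    intro s hs
    simp [Matrix.mulVec_zero]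
  smul_mem' := by
    intro c a ha s hs
    simp [Matrix.mulVec_smul, ha s hs]


/-- The symplectic product `ω((U1,U2),(V1,V2)) = ⟨U1,V2⟩ - ⟨U2,V1⟩`. -/
def symp {n d : ℕ} (x y : (Fin n → ZMod d) × (Fin n → ZMod d)) : ZMod d :=
  dotp x.1 y.2 - dotp x.2 y.1

/-! Let `χ i` be the character of `S` through which `S` commutes with `w i`, that is
`s * w i = χ i s • (w i * s)`. Then `w i` carries `Fix(S)` onto the `χ i`-weight space of `S`. When
the characters `χ i` are closed under multiplication and `H ≤ S` is their common kernel, the sum of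
the distinct characters vanishes outside of `H`. So the sum of the (unnormalized) projections onto
their weight spaces acts on `Fix(H)` as a nonzero scalar, and `Fix(H)` is the sum of the spaces
`w i • Fix(S)`. If moreover `|S| = d ^ n`, the traces of the elements of `S` show that `Fix(S)` is
a line. -/

section CharacterSums

theorem sum_eq_zero_of_mul_mem {M R F : Type*} [Mul M] [IsLeftCancelMul M] [Ring R]
    [NoZeroDivisors R] [FunLike F M R] [MulHomClass F M R] (f : F) {C : Finset M}
    {a : M} (ha : ∀ c ∈ C, a * c ∈ C) (hfa : f a ≠ 1) :
    ∑ c ∈ C, f c = 0 := by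
  have hshift : ∑ c ∈ C, f (a * c) = ∑ c ∈ C, f c :=
    Finset.sum_nbij (a * ·) ha (mul_right_injective a).injOn
      (Finset.surjOn_of_injOn_of_card_le _ ha (mul_right_injective a).injOn le_rfl) fun _ _ ↦ rfl
  have hmul : (f a - 1) * ∑ c ∈ C, f c = 0 := by
    simp_rw [sub_mul, one_mul, Finset.mul_sum, ← map_mul, hshift, sub_self]
  exact (mul_eq_zero.mp hmul).resolve_left (sub_ne_zero.mpr hfa)

theorem sum_apply_eq_ite {G R : Type*} [Monoid G] [CommRing R] [IsDomain R]
    {C : Finset (G →* Rˣ)} (hC : ∀ χ ∈ C, ∀ η ∈ C, χ * η ∈ C) (g : G)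
    [Decidable (∀ χ ∈ C, χ g = 1)] :
    ∑ χ ∈ C, (χ g : R) = if ∀ χ ∈ C, χ g = 1 then (C.card : R) else 0 := by
  split_ifs with h
  · simp +contextual [h]
  · push Not at h
    obtain ⟨χ, hχ, hg⟩ := h
    exact sum_eq_zero_of_mul_mem ((Units.coeHom R).comp (MonoidHom.eval g)) (hC χ hχ) (by simpa)

end CharacterSums

section WeightSpace

variable {k G V ι : Type*} [CommRing k] [Group G] [AddCommGroup V] [Module k V]

/-- The weight space of a linear character `χ` in a representation: the vectors on which the group
acts through `χ`. -/
def weightSpace (ρ : Representation k G V) (χ : G →* kˣ) : Submodule k V :=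
  ⨅ g, Module.End.eigenspace (ρ g) (χ g : k)

variable {ρ : Representation k G V} {χ : G →* kˣ}

theorem mem_weightSpace {v : V} : v ∈ weightSpace ρ χ ↔ ∀ g, ρ g v = (χ g : k) • v := by
  simp [weightSpace]

theorem map_invariants_eq_weightSpace {u : Module.End k V} (hu : IsUnit u)
    (hcomm : ∀ g, ρ g * u = (χ g : k) • (u * ρ g)) :
    ρ.invariants.map u = weightSpace ρ χ := by
  have hcomm' (g : G) (v : V) : ρ g (u v) = (χ g : k) • u (ρ g v) := LinearMap.congr_fun (hcomm g) v
  have hbij : Function.Bijective u := (Module.End.isUnit_iff u).mp hu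
  ext v
  obtain ⟨v, rfl⟩ := hbij.surjective v
  rw [← SetLike.mem_coe, Submodule.map_coe, hbij.injective.mem_set_image, SetLike.mem_coe,
    Representation.mem_invariants, mem_weightSpace]
  refine forall_congr' fun g ↦ ?_
  rw [hcomm', (χ g).isUnit.smul_left_cancel, hbij.injective.eq_iff]

theorem sum_inv_smul_mem_weightSpace [Fintype G] (ρ : Representation k G V) (χ : G →* kˣ) (v : V) :
    ∑ g, (χ g⁻¹ : k) • ρ g v ∈ weightSpace ρ χ := by
  refine mem_weightSpace.mpr fun h ↦ ?_
  calc ρ h (∑ g, (χ g⁻¹ : k) • ρ g v)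
      = ∑ g, (χ h : k) • (χ (h * g)⁻¹ : k) • ρ (h * g) v := by
        simp [smul_smul, mul_comm (χ h : k)]
    _ = (χ h : k) • ∑ g, (χ g⁻¹ : k) • ρ g v := by
        rw [← Finset.smul_sum,
          (Group.mulLeft_bijective h).sum_comp fun g ↦ (χ g⁻¹ : k) • ρ g v]

theorem sum_sum_inv_smul_eq_card_mul_card_smul [IsDomain k] [Fintype G] {C : Finset (G →* kˣ)}
    (hC : ∀ χ ∈ C, ∀ η ∈ C, χ * η ∈ C) {v : V} (hv : ∀ g, (∀ χ ∈ C, χ g = 1) → ρ g v = v) :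
    ∑ χ ∈ C, ∑ g, (χ g⁻¹ : k) • ρ g v =
      (C.card * Nat.card {g | ∀ χ ∈ C, χ g = 1} : k) • v := by
  classical
  have hterm (g : G) : (∑ χ ∈ C, (χ g⁻¹ : k)) • ρ g v =
      if ∀ χ ∈ C, χ g = 1 then (C.card : k) • v else 0 := by
    simp_rw [sum_apply_eq_ite hC, map_inv, inv_eq_one]
    split_ifs with hg
    · rw [hv g hg]
    · rw [zero_smul]
  rw [Finset.sum_comm]
  simp_rw [← Finset.sum_smul, hterm, ← Finset.sum_filter, Finset.sum_const, mul_comm (C.card : k),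
    mul_smul, Nat.cast_smul_eq_nsmul]
  simp [Nat.card_eq_fintype_card, Fintype.card_subtype]

theorem mem_iSup_weightSpace_iff {k : Type*} [Field k] [CharZero k] [Module k V] [Finite G]
    [Nonempty ι] {ρ : Representation k G V} {χ : ι → G →* kˣ}
    (hχ : ∀ i j, ∃ l, χ i * χ j = χ l) {v : V} :
    v ∈ ⨆ i, weightSpace ρ (χ i) ↔ ∀ g, (∀ i, χ i g = 1) → ρ g v = v := by
  refine ⟨fun hv g hg ↦ ?_, fun hv ↦ ?_⟩
  · have hle : ⨆ i, weightSpace ρ (χ i) ≤ Module.End.eigenspace (ρ g) 1 :=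
      iSup_le fun i w hw ↦ by simpa [hg i] using mem_weightSpace.mp hw g
    simpa using hle hv
  · have := Fintype.ofFinite G
    let C := (Set.toFinite (Set.range χ)).toFinset
    have hC : ∀ χ ∈ C, ∀ η ∈ C, χ * η ∈ C := by
      simpa [C, eq_comm] using hχ
    have hsum := sum_sum_inv_smul_eq_card_mul_card_smul (ρ := ρ) hC (v := v) (by simpa [C] using hv)
    have hmem : ∑ χ ∈ C, ∑ g, (χ g⁻¹ : k) • ρ g v ∈ ⨆ i, weightSpace ρ (χ i) := by
      refine Submodule.sum_mem _ fun η hη ↦ ?_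
      obtain ⟨i, rfl⟩ : ∃ i, χ i = η := by simpa [C] using hη
      exact Submodule.mem_iSup_of_mem i (sum_inv_smul_mem_weightSpace ρ (χ i) v)
    have hCcard : C.card ≠ 0 := by simp [C]
    have hker : Nat.card {g | ∀ χ ∈ C, χ g = 1} ≠ 0 :=
      Nat.card_ne_zero.mpr ⟨⟨1, fun χ _ ↦ map_one χ⟩, inferInstance⟩
    rw [hsum] at hmem
    exact (Submodule.smul_mem_iff _ (by exact_mod_cast mul_ne_zero hCcard hker)).mp hmem

end WeightSpace

section Pauli

variable {d n : ℕ}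

/-- The operators on the state space of `n` qudits, in the standard basis. -/
abbrev QuditMatrix (d n : ℕ) : Type := Matrix (Fin n → ZMod d) (Fin n → ZMod d) ℂ

theorem dotp_eq_dotProduct (A B : Fin n → ZMod d) : dotp A B = A ⬝ᵥ B := rfl

theorem symp_add_left (x y z : (Fin n → ZMod d) × (Fin n → ZMod d)) :
    symp (x + y) z = symp x z + symp y z := by
  simp only [symp, dotp_eq_dotProduct, Prod.fst_add, Prod.snd_add, add_dotProduct]
  ring

theorem pauliWord_zero : PauliWord d n 0 0 = 1 := by
  ext J K
  simp [PauliWord, dotp_eq_dotProduct, Matrix.one_apply]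

variable [NeZero d]

theorem q_pow_val (x : ZMod d) : q d ^ x.val = ZMod.stdAddChar x := by
  have h := ZMod.stdAddChar_coe (N := d) x.val
  rw [Int.cast_natCast, Int.cast_natCast, ZMod.natCast_zmod_val] at h
  rw [h, q, ← Complex.exp_nat_mul]
  congr 1
  ring

theorem pauliWord_mul (U V U' V' : Fin n → ZMod d) :
    PauliWord d n U V * PauliWord d n U' V' =
      ZMod.stdAddChar (-dotp U' V) • PauliWord d n (U + U') (V + V') := by
  ext J L
  rw [Matrix.mul_apply, Finset.sum_eq_single (J - V)]
  · have hiff : J - V = L + V' ↔ J = L + (V + V') := by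
      rw [sub_eq_iff_eq_add, add_assoc, add_comm V' V]
    by_cases h : J = L + (V + V')
    · simp only [PauliWord, Matrix.of_apply, Matrix.smul_apply, sub_add_cancel, if_true,
        if_pos (hiff.mpr h), if_pos h, q_pow_val, smul_eq_mul, ← AddChar.map_add_eq_mul,
        dotp_eq_dotProduct, dotProduct_sub, add_dotProduct]
      congr 1
      ring
    · simp [PauliWord, hiff, h]
  · intro K _ hK
    have : J ≠ K + V := fun h ↦ hK (by simp [h])
    simp [PauliWord, this]
  · simp

theorem trace_pauliWord {U V : Fin n → ZMod d} (h : (U, V) ≠ 0) :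
    (PauliWord d n U V).trace = 0 := by
  by_cases hV : V = 0
  · subst hV
    obtain ⟨i, hi⟩ := Function.ne_iff.mp fun hU : U = 0 ↦ h (by simp [hU])
    let χ : AddChar (Fin n → ZMod d) ℂ :=
      ZMod.stdAddChar.compAddMonoidHom (dotProductBilin (ZMod d) (ZMod d) U).toAddMonoidHom
    have hχ : χ ≠ 0 := by
      refine AddChar.ne_one_iff.mpr ⟨Pi.single i 1, ?_⟩
      simpa [χ] using ZMod.injective_stdAddChar.ne hi
    simpa [Matrix.trace, PauliWord, q_pow_val, χ, dotp_eq_dotProduct] using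
      AddChar.sum_eq_zero_iff_ne_zero.mpr hχ
  · simp [Matrix.trace, PauliWord, hV]

theorem mem_pauliSet {g : QuditMatrix d n} :
    g ∈ PauliSet d n ↔ ∃ (k : ZMod d) (U V : Fin n → ZMod d),
      g = (ZMod.stdAddChar k : ℂ) • PauliWord d n U V := by
  simp [PauliSet, q_pow_val]

theorem isUnit_of_mem_pauliSet {g : QuditMatrix d n} (hg : g ∈ PauliSet d n) : IsUnit g := by
  obtain ⟨k, U, V, rfl⟩ := mem_pauliSet.mp hg
  refine IsUnit.of_mul_eq_one
    ((ZMod.stdAddChar (-k - dotp U V) : ℂ) • PauliWord d n (-U) (-V)) ?_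
  rw [smul_mul_smul_comm, pauliWord_mul, smul_smul, add_neg_cancel, add_neg_cancel,
    pauliWord_zero, ← AddChar.map_add_eq_mul, ← AddChar.map_add_eq_mul]
  have hphase : k + (-k - dotp U V) + -dotp (-U) V = 0 := by
    rw [dotp_eq_dotProduct, dotp_eq_dotProduct, neg_dotProduct]
    ring
  rw [hphase, AddChar.map_zero_eq_one, one_smul]

theorem finite_pauliSet : (PauliSet d n).Finite := by
  refine (Set.finite_range fun x : ZMod d × (Fin n → ZMod d) × (Fin n → ZMod d) ↦
    q d ^ x.1.val • PauliWord d n x.2.1 x.2.2).subset ?_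
  rintro _ ⟨k, U, V, rfl⟩
  exact ⟨(k, U, V), rfl⟩

theorem trace_eq_zero_of_mem_pauliSet {g : QuditMatrix d n} (hg : g ∈ PauliSet d n)
    (hscalar : ∀ c : ℂ, g ≠ c • 1) : g.trace = 0 := by
  obtain ⟨k, U, V, rfl⟩ := hg
  have hUV : (U, V) ≠ 0 := by
    rintro ⟨rfl, rfl⟩
    exact hscalar _ (by rw [pauliWord_zero])
  rw [Matrix.trace_smul, trace_pauliWord hUV, smul_zero]

/-- `R` is the symplectic label of the paper: it sends `q ^ k • W(U, V)` to `(U, V)`. Its values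
outside of the Pauli group are arbitrary. -/
def IsPauliLabel (R : QuditMatrix d n → (Fin n → ZMod d) × (Fin n → ZMod d)) : Prop :=
  ∀ (k : ZMod d) (U V : Fin n → ZMod d), R (q d ^ k.val • PauliWord d n U V) = (U, V)

namespace IsPauliLabel

variable {R : QuditMatrix d n → (Fin n → ZMod d) × (Fin n → ZMod d)} {a b : QuditMatrix d n}

theorem apply_smul_pauliWord (hR : IsPauliLabel R) (k : ZMod d) (U V : Fin n → ZMod d) :
    R ((ZMod.stdAddChar k : ℂ) • PauliWord d n U V) = (U, V) := by
  rw [← q_pow_val, hR]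

theorem map_mul (hR : IsPauliLabel R) (ha : a ∈ PauliSet d n) (hb : b ∈ PauliSet d n) :
    R (a * b) = R a + R b := by
  obtain ⟨k, U, V, rfl⟩ := mem_pauliSet.mp ha
  obtain ⟨k', U', V', rfl⟩ := mem_pauliSet.mp hb
  rw [smul_mul_smul_comm, pauliWord_mul, smul_smul, ← AddChar.map_add_eq_mul,
    ← AddChar.map_add_eq_mul]
  simp only [hR.apply_smul_pauliWord, Prod.mk_add_mk]

theorem mul_eq_smul_mul (hR : IsPauliLabel R) (ha : a ∈ PauliSet d n) (hb : b ∈ PauliSet d n) :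
    a * b = (ZMod.stdAddChar (symp (R a) (R b)) : ℂ) • (b * a) := by
  obtain ⟨k, U, V, rfl⟩ := mem_pauliSet.mp ha
  obtain ⟨k', U', V', rfl⟩ := mem_pauliSet.mp hb
  simp only [hR.apply_smul_pauliWord, smul_mul_smul_comm, pauliWord_mul, smul_smul,
    ← AddChar.map_add_eq_mul, symp, dotp_eq_dotProduct, add_comm U' U, add_comm V' V,
    dotProduct_comm V U']
  congr 2
  ring

end IsPauliLabel

end Pauli

/-- `S` is a stabilizer group: an abelian subgroup of the Pauli group without nontrivial scalars. -/
structure IsStabilizerGroup {d n : ℕ} [NeZero d] (S : Set (QuditMatrix d n)) : Prop where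
  subset_pauliSet : S ⊆ PauliSet d n
  one_mem : 1 ∈ S
  mul_mem : ∀ a ∈ S, ∀ b ∈ S, a * b ∈ S
  exists_mul_eq_one : ∀ a ∈ S, ∃ b ∈ S, a * b = 1
  mul_comm : ∀ a ∈ S, ∀ b ∈ S, a * b = b * a
  smul_one_eq_one : ∀ c : ℂ, c • (1 : QuditMatrix d n) ∈ S → c • (1 : QuditMatrix d n) = 1

namespace IsStabilizerGroup

variable {d n : ℕ} [NeZero d] {ι : Type*} {S : Set (QuditMatrix d n)}

theorem inter_centralizer (hS : IsStabilizerGroup S) (A : Set (QuditMatrix d n)) :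
    IsStabilizerGroup (S ∩ A.centralizer) where
  subset_pauliSet := Set.inter_subset_left.trans hS.subset_pauliSet
  one_mem := ⟨hS.one_mem, Set.one_mem_centralizer⟩
  mul_mem _ ha _ hb := ⟨hS.mul_mem _ ha.1 _ hb.1, Set.mul_mem_centralizer ha.2 hb.2⟩
  exists_mul_eq_one a ha := by
    obtain ⟨b, hb, hab⟩ := hS.exists_mul_eq_one a ha.1
    refine ⟨b, ⟨hb, fun m hm ↦ ?_⟩, hab⟩
    let u : (QuditMatrix d n)ˣ := ⟨a, b, hab, mul_eq_one_comm.mp hab⟩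
    exact (Commute.units_inv_right (u := u) (ha.2 m hm)).eq
  mul_comm a ha b hb := hS.mul_comm a ha.1 b hb.1
  smul_one_eq_one c hc := hS.smul_one_eq_one c hc.1

/-- `S` as a submonoid of the matrix algebra, which carries the group structure of `S`. -/
def toSubmonoid (hS : IsStabilizerGroup S) : Submonoid (QuditMatrix d n) where
  carrier := S
  one_mem' := hS.one_mem
  mul_mem' ha hb := hS.mul_mem _ ha _ hb

noncomputable instance (hS : IsStabilizerGroup S) : Group hS.toSubmonoid :=
  groupOfIsUnit fun a ↦ by
    obtain ⟨b, hb, hab⟩ := hS.exists_mul_eq_one a a.2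
    exact IsUnit.of_mul_eq_one ⟨b, hb⟩ (Subtype.ext hab)

instance (hS : IsStabilizerGroup S) : Finite hS.toSubmonoid :=
  finite_pauliSet.subset hS.subset_pauliSet

/-- The action of a stabilizer group on the states. -/
noncomputable def rep (hS : IsStabilizerGroup S) :
    Representation ℂ hS.toSubmonoid ((Fin n → ZMod d) → ℂ) :=
  (Matrix.toLinAlgEquiv' : QuditMatrix d n ≃ₐ[ℂ] _).toMonoidHom.comp hS.toSubmonoid.subtype

theorem rep_apply (hS : IsStabilizerGroup S) (s : hS.toSubmonoid) :
    hS.rep s = Matrix.toLin' (s : QuditMatrix d n) := rfl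

theorem invariants_rep (hS : IsStabilizerGroup S) : hS.rep.invariants = FixSubspace d n S := by
  ext v
  exact Subtype.forall

theorem card_mul_finrank_fixSubspace (hS : IsStabilizerGroup S) :
    Nat.card S * Module.finrank ℂ (FixSubspace d n S) = d ^ n := by
  have := Fintype.ofFinite hS.toSubmonoid
  have hcard : (Nat.card hS.toSubmonoid : ℂ) ≠ 0 := Nat.cast_ne_zero.mpr Nat.card_pos.ne'
  have := invertibleOfNonzero hcard
  have hchar : ∑ s, hS.rep.character s = (d : ℂ) ^ n := by
    rw [Finset.sum_eq_single_of_mem 1 (Finset.mem_univ _), Representation.char_one]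
    · simp
    · intro s _ hs
      rw [Representation.character, rep_apply, Matrix.trace_toLin'_eq]
      refine trace_eq_zero_of_mem_pauliSet (hS.subset_pauliSet s.2) fun c hc ↦ hs ?_
      exact Subtype.ext (hc.trans (hS.smul_one_eq_one c (hc ▸ s.2)))
  have havg := hS.rep.card_inv_mul_sum_char_eq_finrank
  rw [hchar, hS.invariants_rep, inv_mul_eq_iff_eq_mul₀ hcard] at havg
  exact_mod_cast havg.symm

theorem fixSubspace_eq_span_singleton (hS : IsStabilizerGroup S) (hcard : Nat.card S = d ^ n)
    {ψ : (Fin n → ZMod d) → ℂ} (hψS : ψ ∈ FixSubspace d n S) (hψ : ψ ≠ 0) :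
    FixSubspace d n S = ℂ ∙ ψ := by
  have hfinrank : Module.finrank ℂ (FixSubspace d n S) = 1 := by
    have hdim := hS.card_mul_finrank_fixSubspace
    rw [hcard] at hdim
    exact Nat.eq_of_mul_eq_mul_left (pow_pos (NeZero.pos d) n) (by rw [hdim, mul_one])
  refine (Submodule.eq_of_le_of_finrank_eq ?_ ?_).symm
  · rwa [Submodule.span_singleton_le_iff_mem]
  · rw [hfinrank, finrank_span_singleton hψ]

variable {R : QuditMatrix d n → (Fin n → ZMod d) × (Fin n → ZMod d)}

/-- The character `s ↦ q ^ ω(R s, x)` of `S`, through which `S` commutes with the Pauli operators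
of label `x`. For `x = R w` its exponent is the classical word `Cl_S(w)`. -/
noncomputable def commChar (hS : IsStabilizerGroup S) (hR : IsPauliLabel R)
    (x : (Fin n → ZMod d) × (Fin n → ZMod d)) : hS.toSubmonoid →* ℂˣ :=
  (ZMod.stdAddChar.toMonoidHom.comp <|
    MonoidHom.mk' (fun s : hS.toSubmonoid ↦ Multiplicative.ofAdd (symp (R s) x)) fun s t ↦ by
      rw [Submonoid.coe_mul, hR.map_mul (hS.subset_pauliSet s.2) (hS.subset_pauliSet t.2),
        symp_add_left, ofAdd_add]).toHomUnits

theorem coe_commChar_apply (hS : IsStabilizerGroup S) (hR : IsPauliLabel R)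
    (x : (Fin n → ZMod d) × (Fin n → ZMod d)) (s : hS.toSubmonoid) :
    (hS.commChar hR x s : ℂ) = ZMod.stdAddChar (symp (R s) x) := rfl

theorem mul_eq_commChar_smul (hS : IsStabilizerGroup S) (hR : IsPauliLabel R)
    {w : QuditMatrix d n} (hw : w ∈ PauliSet d n) (s : hS.toSubmonoid) :
    s * w = (hS.commChar hR (R w) s : ℂ) • (w * s) :=
  hR.mul_eq_smul_mul (hS.subset_pauliSet s.2) hw

theorem commChar_apply_eq_one_iff (hS : IsStabilizerGroup S) (hR : IsPauliLabel R)
    {w : QuditMatrix d n} (hw : w ∈ PauliSet d n) (s : hS.toSubmonoid) :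
    hS.commChar hR (R w) s = 1 ↔ w * s = s * w := by
  have hne : w * (s : QuditMatrix d n) ≠ 0 :=
    ((isUnit_of_mem_pauliSet hw).mul (isUnit_of_mem_pauliSet (hS.subset_pauliSet s.2))).ne_zero
  rw [hS.mul_eq_commChar_smul hR hw, ← Units.val_eq_one, ← (smul_left_injective ℂ hne).eq_iff,
    one_smul, eq_comm]

theorem map_fixSubspace_eq_weightSpace (hS : IsStabilizerGroup S) (hR : IsPauliLabel R)
    {w : QuditMatrix d n} (hw : w ∈ PauliSet d n) :
    (FixSubspace d n S).map w.mulVecLin = weightSpace hS.rep (hS.commChar hR (R w)) := by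
  rw [← hS.invariants_rep]
  refine map_invariants_eq_weightSpace
    ((isUnit_of_mem_pauliSet hw).map (Matrix.toLinAlgEquiv' (R := ℂ))) fun s ↦ ?_
  have := congrArg (Matrix.toLinAlgEquiv' (R := ℂ)) (hS.mul_eq_commChar_smul hR hw s)
  rwa [map_mul, map_smul, map_mul] at this

theorem fixSubspace_inter_centralizer [Nonempty ι] (hS : IsStabilizerGroup S)
    (hR : IsPauliLabel R) {w : ι → QuditMatrix d n} (hw : ∀ i, w i ∈ PauliSet d n)
    (hclosed : ∀ i j, ∃ l, ∀ s ∈ S,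
      symp (R s) (R (w i)) + symp (R s) (R (w j)) = symp (R s) (R (w l))) :
    FixSubspace d n (S ∩ (Set.range w).centralizer) =
      ⨆ i, (FixSubspace d n S).map (w i).mulVecLin := by
  have hmul (i j : ι) : ∃ l,
      hS.commChar hR (R (w i)) * hS.commChar hR (R (w j)) = hS.commChar hR (R (w l)) := by
    obtain ⟨l, hl⟩ := hclosed i j
    refine ⟨l, MonoidHom.ext fun s ↦ Units.ext ?_⟩
    simp only [MonoidHom.mul_apply, Units.val_mul, coe_commChar_apply, ← hl s s.2,
      AddChar.map_add_eq_mul]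
  simp_rw [fun i ↦ hS.map_fixSubspace_eq_weightSpace hR (hw i)]
  ext v
  rw [mem_iSup_weightSpace_iff hmul]
  simp only [hS.commChar_apply_eq_one_iff hR (hw _)]
  exact ⟨fun hv s hs ↦ hv s ⟨s.2, Set.forall_mem_range.mpr hs⟩,
    fun hv s hs ↦ hv ⟨s, hs.1⟩ fun i ↦ hs.2 _ (Set.mem_range_self i)⟩

end IsStabilizerGroup

theorem cws_classical_group_is_stabilizer_general {d n : ℕ} [NeZero d] {ι : Type*} [Nonempty ι]
    {R : QuditMatrix d n → (Fin n → ZMod d) × (Fin n → ZMod d)} (hR : IsPauliLabel R)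
    {S : Set (QuditMatrix d n)} (hS : IsStabilizerGroup S)
    {w : ι → QuditMatrix d n} (hw : ∀ i, w i ∈ PauliSet d n)
    (hclosed : ∀ i j, ∃ l, ∀ s ∈ S,
      symp (R s) (R (w i)) + symp (R s) (R (w j)) = symp (R s) (R (w l))) :
    ∃ H, IsStabilizerGroup H ∧
      FixSubspace d n H = ⨆ i, (FixSubspace d n S).map (w i).mulVecLin :=
  ⟨_, hS.inter_centralizer _, hS.fixSubspace_inter_centralizer hR hw hclosed⟩

theorem cws_classical_group_is_stabilizer (d n K : ℕ) [NeZero d] (hd : 2 ≤ d) (hn : 1 ≤ n)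
    (Rmap : Matrix (Fin n → ZMod d) (Fin n → ZMod d) ℂ →
      (Fin n → ZMod d) × (Fin n → ZMod d))
    (hR : ∀ (k : ZMod d) (U V : Fin n → ZMod d),
      Rmap (q d ^ k.val • PauliWord d n U V) = (U, V))
    (S : Set (Matrix (Fin n → ZMod d) (Fin n → ZMod d) ℂ))
    (hSsub : S ⊆ PauliSet d n)
    (hS1 : (1 : Matrix (Fin n → ZMod d) (Fin n → ZMod d) ℂ) ∈ S)
    (hSmul : ∀ a ∈ S, ∀ b ∈ S, a * b ∈ S)
    (hSinv : ∀ a ∈ S, ∃ b ∈ S, a * b = 1)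
    (hScomm : ∀ a ∈ S, ∀ b ∈ S, a * b = b * a)
    (hSscal : ∀ c : ℂ, c • (1 : Matrix (Fin n → ZMod d) (Fin n → ZMod d) ℂ) ∈ S →
      c • (1 : Matrix (Fin n → ZMod d) (Fin n → ZMod d) ℂ) = 1)
    (hcard : Nat.card S = d ^ n)
    (ψ : (Fin n → ZMod d) → ℂ) (hψS : ψ ∈ FixSubspace d n S) (hψ : ψ ≠ 0)
    (hK : 0 < K)
    (w : Fin K → Matrix (Fin n → ZMod d) (Fin n → ZMod d) ℂ)
    (hw : ∀ i, w i ∈ PauliSet d n)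
    (hw1 : w ⟨0, hK⟩ = 1)
    (hli : LinearIndependent ℂ (fun i => (w i).mulVec ψ))
    (hclosed : ∀ i j : Fin K, ∃ l : Fin K, ∀ s ∈ S,
      symp (Rmap s) (Rmap (w i)) + symp (Rmap s) (Rmap (w j)) =
        symp (Rmap s) (Rmap (w l))) :
    ∃ H : Set (Matrix (Fin n → ZMod d) (Fin n → ZMod d) ℂ),
      H ⊆ PauliSet d n ∧
      (1 : Matrix (Fin n → ZMod d) (Fin n → ZMod d) ℂ) ∈ H ∧
      (∀ a ∈ H, ∀ b ∈ H, a * b ∈ H) ∧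
      (∀ a ∈ H, ∃ b ∈ H, a * b = 1) ∧
      (∀ a ∈ H, ∀ b ∈ H, a * b = b * a) ∧
      (∀ c : ℂ, c • (1 : Matrix (Fin n → ZMod d) (Fin n → ZMod d) ℂ) ∈ H →
        c • (1 : Matrix (Fin n → ZMod d) (Fin n → ZMod d) ℂ) = 1) ∧
      FixSubspace d n H = Submodule.span ℂ (Set.range fun i => (w i).mulVec ψ) := by
  have := Fin.pos_iff_nonempty.mp hK
  have hS : IsStabilizerGroup S := ⟨hSsub, hS1, hSmul, hSinv, hScomm, hSscal⟩
  obtain ⟨H, hH, hfix⟩ := cws_classical_group_is_stabilizer_general hR hS hw hclosed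
  refine ⟨H, hH.1, hH.2, hH.3, hH.4, hH.5, hH.6, hfix.trans ?_⟩
  simp [hS.fixSubspace_eq_span_singleton hcard hψS hψ, Submodule.map_span,
    Submodule.span_range_eq_iSup]
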